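/- Let n ≥ 1 and p ∈ (0,∞). Identify M_{2n}(ℂ) with 2×2 block matrices over Mₙ(ℂ) (via fromBlocks), and let 𝒫_{1/2} denote the set of projections in M_{2n}(ℂ) of normalized trace 1/2. Let φ : 𝒫_{1/2} → 𝒫_{1/2} be a surjective L^p-isometry such that φ(fromBlocks(I, 0, 0, 0)) = fromBlocks(I, 0, 0, 0) and φ((1/2)·fromBlocks(I, V, Vᴴ, I)) = (1/2)·fromBlocks(I, V, Vᴴ, I) for every unitary V ∈ Mₙ(ℂ). Then φ(Q) = Q for every Q ∈ 𝒫_{1/2}. -/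

import Mathlib

open Matrix
open scoped ComplexOrder

/-- The normalized trace `L^p`-(quasi-)norm `(τ(|A|^p))^{1/p}` of a complex matrix,
computed via the eigenvalues of `Aᴴ * A`: the eigenvalues of `|A|^p` are the
`(p/2)`-th powers of those of `Aᴴ * A`, and the trace of a Hermitian matrix is the
sum of its eigenvalues. -/
noncomputable def lpnorm {m : Type*} [Fintype m] [DecidableEq m] (p : ℝ)
    (A : Matrix m m ℂ) : ℝ :=
  ((∑ i, ((Matrix.posSemidef_conjTranspose_mul_self A).isHermitian.eigenvalues i) ^ (p / 2)) /
      (Fintype.card m : ℝ)) ^ (1 / p)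

/-- The `ℓ² → ℓ²` operator norm of a complex matrix. -/
noncomputable def l2opNorm {m : Type*} [Fintype m] [DecidableEq m]
    (A : Matrix m m ℂ) : ℝ :=
  ‖Matrix.toEuclideanCLM (𝕜 := ℂ) A‖

/-!
The difference `diagProj V - fstProj` is a real multiple of a unitary, and near such a matrix the
`L^p`-norm is strictly differentiable for every `p > 0`, its derivative being a multiple of the real
trace pairing. Let `P`, `Q` be half projections close to `fstProj` that are equidistant from
`diagProj V` for all unitary `V` close to `1`. Then the off-diagonal block of `P - Q` has real
pairing `o(‖P - Q‖)` with all these `V`, which span the matrices over `ℝ`, while idempotence alone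
makes the diagonal blocks `o(‖P - Q‖)`. Hence `P = Q`.

An isometry fixing `frame` pointwise therefore fixes every half projection within some distance
`δ > 0` of `fstProj`. A block Hadamard rotation moves `diagProj V` to `fstProj` and a neighbourhood
of it in `frame` to half projections already known to be fixed, so the same holds around every point
of `frame`, with `δ` independent of the isometry. In particular, for every unitary `g` close to `1`
the conjugated isometry again fixes `frame` pointwise. The unitary group is connected, hence
generated by any neighbourhood of `1`, so this holds for all `g`; and every half projection is a
unitary conjugate of `fstProj`.
-/

open Filter Asymptotics
open Unitary (conjStarAlgAut conjStarAlgAut_apply)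
open scoped Topology Matrix.Norms.L2Operator

section Eigenvalues

variable {m : Type*} [Fintype m] [DecidableEq m] {X Y : Matrix m m ℂ}

lemma toEuclideanCLM_eigenvectorBasis (hX : X.IsHermitian) (i : m) :
    toEuclideanCLM (𝕜 := ℂ) X (hX.eigenvectorBasis i) =
      hX.eigenvalues i • hX.eigenvectorBasis i := by
  ext k
  simpa using congrFun (hX.mulVec_eigenvectorBasis i) k

lemma inner_toEuclideanCLM_left (hX : X.IsHermitian) (x y : EuclideanSpace ℂ m) :
    inner ℂ (toEuclideanCLM (𝕜 := ℂ) X x) y = inner ℂ x (toEuclideanCLM (𝕜 := ℂ) X y) := by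
  rw [← ContinuousLinearMap.adjoint_inner_right, ← ContinuousLinearMap.star_eq_adjoint, ← map_star,
    star_eq_conjTranspose, hX.eq]

lemma inner_eigenvectorBasis_sub (hX : X.IsHermitian) (hY : Y.IsHermitian) (i j : m) :
    inner ℂ (hX.eigenvectorBasis i) (toEuclideanCLM (𝕜 := ℂ) (X - Y) (hY.eigenvectorBasis j)) =
      (hX.eigenvalues i - hY.eigenvalues j : ℝ) •
        inner ℂ (hX.eigenvectorBasis i) (hY.eigenvectorBasis j) := by
  rw [map_sub, _root_.sub_apply, inner_sub_right, ← inner_toEuclideanCLM_left hX,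
    toEuclideanCLM_eigenvectorBasis, toEuclideanCLM_eigenvectorBasis, inner_smul_right_eq_smul,
    inner_smul_left_eq_smul, sub_smul]

lemma norm_toEuclideanCLM_le_of_norm_eq_one (A : Matrix m m ℂ) {x : EuclideanSpace ℂ m}
    (hx : ‖x‖ = 1) : ‖toEuclideanCLM (𝕜 := ℂ) A x‖ ≤ ‖A‖ := by
  simpa [hx, cstar_norm_def] using (toEuclideanCLM (𝕜 := ℂ) A).le_opNorm x

lemma abs_eigenvalues_sub_le (hX : X.IsHermitian) (r : ℝ) (i : m) :
    |hX.eigenvalues i - r| ≤ ‖X - r • (1 : Matrix m m ℂ)‖ := by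
  have h := norm_toEuclideanCLM_le_of_norm_eq_one (X - r • (1 : Matrix m m ℂ))
    (hX.eigenvectorBasis.norm_eq_one i)
  rwa [map_sub, _root_.sub_apply, toEuclideanCLM_eigenvectorBasis, ← Complex.coe_smul,
    ← algebraMap_smul ℂ r, map_smul, map_one, _root_.smul_apply,
    one_apply_eq_self, Complex.coe_algebraMap, ← sub_smul, norm_smul,
    hX.eigenvectorBasis.norm_eq_one, mul_one, ← Complex.ofReal_sub, Complex.norm_real] at h

lemma norm_le_of_eigenvalues_le (hX : X.IsHermitian) {c : ℝ} (hc : 0 ≤ c)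
    (h : ∀ i, |hX.eigenvalues i| ≤ c) : ‖X‖ ≤ c := by
  rw [hX.spectral_theorem, Unitary.conjStarAlgAut_apply, ← Unitary.coe_star,
    CStarRing.norm_mul_coe_unitary, CStarRing.norm_coe_unitary_mul, l2_opNorm_diagonal]
  exact (pi_norm_le_iff_of_nonneg hc).mpr fun i => by simpa using h i

lemma norm_inner_eigenvectorBasis_sq_mul_le (hX : X.IsHermitian) (hY : Y.IsHermitian) (i j : m) :
    ‖inner ℂ (hX.eigenvectorBasis i) (hY.eigenvectorBasis j)‖ ^ 2 *
      |hX.eigenvalues i - hY.eigenvalues j| ≤ ‖X - Y‖ := by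
  set u := hX.eigenvectorBasis
  set v := hY.eigenvectorBasis
  have hnorm : ‖inner ℂ (u i) (v j)‖ ≤ 1 := by
    simpa [u.norm_eq_one, v.norm_eq_one] using norm_inner_le_norm (𝕜 := ℂ) (u i) (v j)
  calc ‖inner ℂ (u i) (v j)‖ ^ 2 * |hX.eigenvalues i - hY.eigenvalues j|
      ≤ ‖inner ℂ (u i) (v j)‖ * |hX.eigenvalues i - hY.eigenvalues j| := by
        gcongr
        exact pow_le_of_le_one (norm_nonneg _) hnorm two_ne_zero
    _ = ‖inner ℂ (u i) (toEuclideanCLM (𝕜 := ℂ) (X - Y) (v j))‖ := by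
        rw [inner_eigenvectorBasis_sub, norm_smul, Real.norm_eq_abs, mul_comm]
    _ ≤ ‖u i‖ * ‖toEuclideanCLM (𝕜 := ℂ) (X - Y) (v j)‖ := norm_inner_le_norm _ _
    _ ≤ ‖X - Y‖ := by
        rw [u.norm_eq_one, one_mul]
        exact norm_toEuclideanCLM_le_of_norm_eq_one _ (v.norm_eq_one j)

/-- The squared overlaps of the two eigenbases form a doubly stochastic matrix, so the two sums can
be compared termwise. -/
lemma abs_sum_eigenvalues_sub_le (hX : X.IsHermitian) (hY : Y.IsHermitian) (f : ℝ → ℝ) {η : ℝ}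
    (hη : 0 ≤ η) (hf : ∀ i j, |f (hX.eigenvalues i) - f (hY.eigenvalues j)| ≤
      η * |hX.eigenvalues i - hY.eigenvalues j|) :
    |∑ i, f (hX.eigenvalues i) - ∑ j, f (hY.eigenvalues j)| ≤
      η * (Fintype.card m ^ 2 * ‖X - Y‖) := by
  set u := hX.eigenvectorBasis
  set v := hY.eigenvectorBasis
  set w : m → m → ℝ := fun i j => ‖inner ℂ (u i) (v j)‖ ^ 2
  have hrow (i : m) : ∑ j, w i j = 1 := by
    simpa [u.norm_eq_one] using v.sum_sq_norm_inner_left (u i)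
  have hcol (j : m) : ∑ i, w i j = 1 := by
    simpa [v.norm_eq_one] using u.sum_sq_norm_inner_right (v j)
  have hterm (i j : m) : w i j * |f (hX.eigenvalues i) - f (hY.eigenvalues j)| ≤ η * ‖X - Y‖ :=
    calc w i j * |f (hX.eigenvalues i) - f (hY.eigenvalues j)|
        ≤ w i j * (η * |hX.eigenvalues i - hY.eigenvalues j|) := by
          gcongr
          exact hf i j
      _ = η * (w i j * |hX.eigenvalues i - hY.eigenvalues j|) := mul_left_comm _ _ _
      _ ≤ η * ‖X - Y‖ := by
          gcongr
          exact norm_inner_eigenvectorBasis_sq_mul_le hX hY i j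
  have hsum : ∑ i, f (hX.eigenvalues i) - ∑ j, f (hY.eigenvalues j) =
      ∑ i, ∑ j, w i j * (f (hX.eigenvalues i) - f (hY.eigenvalues j)) := by
    simp only [mul_sub, Finset.sum_sub_distrib]
    rw [Finset.sum_comm (f := fun i j => w i j * f (hY.eigenvalues j))]
    simp only [← Finset.sum_mul, hrow, hcol, one_mul]
  calc |∑ i, f (hX.eigenvalues i) - ∑ j, f (hY.eigenvalues j)|
      ≤ ∑ i, ∑ j, |w i j * (f (hX.eigenvalues i) - f (hY.eigenvalues j))| := by
        rw [hsum]
        exact (Finset.abs_sum_le_sum_abs _ _).trans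
          (Finset.sum_le_sum fun i _ => Finset.abs_sum_le_sum_abs _ _)
    _ ≤ ∑ _i : m, ∑ _j : m, η * ‖X - Y‖ := by
        gcongr with i _ j _
        rw [abs_mul, abs_of_nonneg (by positivity)]
        exact hterm i j
    _ = η * (Fintype.card m ^ 2 * ‖X - Y‖) := by
        simp only [Finset.sum_const, Finset.card_univ, nsmul_eq_mul]
        ring

lemma sum_eigenvalues_eq_re_trace (hX : X.IsHermitian) :
    ∑ i, hX.eigenvalues i = X.trace.re := by
  simp [hX.trace_eq_sum_eigenvalues]

lemma isLittleO_sum_eigenvalues {ι : Type*} {l : Filter ι} {X Y : ι → Matrix m m ℂ}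
    (hX : ∀ t, (X t).IsHermitian) (hY : ∀ t, (Y t).IsHermitian) {f : ℝ → ℝ} {f' r : ℝ}
    (hf : HasStrictDerivAt f f' r) (hXr : Tendsto X l (𝓝 (r • 1))) (hYr : Tendsto Y l (𝓝 (r • 1))) :
    (fun t => ∑ i, f ((hX t).eigenvalues i) - ∑ i, f ((hY t).eigenvalues i) -
      f' * (X t - Y t).trace.re) =o[l] fun t => X t - Y t := by
  refine isLittleO_iff.mpr fun c hc => ?_
  obtain ⟨η, hη, hηc⟩ : ∃ η > 0, η * (Fintype.card m : ℝ) ^ 2 ≤ c :=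
    ⟨c / (Fintype.card m ^ 2 + 1), by positivity, by
      rw [div_mul_eq_mul_div, div_le_iff₀ (by positivity)]; nlinarith⟩
  have hlip := hasStrictFDerivAt_iff_isLittleO.mp hf.hasStrictFDerivAt
  obtain ⟨ε, hε, hball⟩ := Metric.eventually_nhds_iff_ball.mp (isLittleO_iff.mp hlip hη)
  have hmem {Z : ι → Matrix m m ℂ} (hZ : ∀ t, (Z t).IsHermitian) (hZr : Tendsto Z l (𝓝 (r • 1))) :
      ∀ᶠ t in l, ∀ i, (hZ t).eigenvalues i ∈ Metric.ball r ε := by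
    filter_upwards [hZr.eventually (Metric.ball_mem_nhds _ hε)] with t ht i
    rw [dist_eq_norm] at ht
    exact (abs_eigenvalues_sub_le (hZ t) r i).trans_lt ht
  filter_upwards [hmem hX hXr, hmem hY hYr] with t hXt hYt
  have hbound := abs_sum_eigenvalues_sub_le (hX t) (hY t) (fun x => f x - f' * x) hη.le
    fun i j => by
      have h := hball ((hX t).eigenvalues i, (hY t).eigenvalues j)
        (ball_prod_same r r ε ▸ ⟨hXt i, hYt j⟩)
      rw [ContinuousLinearMap.toSpanSingleton_apply, smul_eq_mul] at h
      refine le_of_eq_of_le (congrArg abs ?_) h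
      ring
  simp only [Finset.sum_sub_distrib, ← Finset.mul_sum, sum_eigenvalues_eq_re_trace] at hbound
  rw [trace_sub, Complex.sub_re, Real.norm_eq_abs]
  calc _ = _ := by congr 1; ring
    _ ≤ η * (Fintype.card m ^ 2 * ‖X t - Y t‖) := hbound
    _ ≤ c * ‖X t - Y t‖ := by rw [← mul_assoc]; gcongr

end Eigenvalues

section LpNorm

variable {m : Type*} [Fintype m] [DecidableEq m] {A B : Matrix m m ℂ} {p : ℝ}

/-- The eigenvalues of the Gram matrix `Aᴴ * A`, i.e. the squared singular values of `A`, through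
which `lpnorm` is defined. -/
noncomputable abbrev gramEigenvalues (A : Matrix m m ℂ) : m → ℝ :=
  (posSemidef_conjTranspose_mul_self A).isHermitian.eigenvalues

/-- The real Frobenius inner product with `A`, as a functional on matrices. -/
noncomputable def reInner (A : Matrix m m ℂ) : Matrix m m ℂ →L[ℝ] ℝ :=
  (Complex.reLm ∘ₗ (traceLinearMap m ℂ ℂ).restrictScalars ℝ ∘ₗ
    LinearMap.mulLeft ℝ Aᴴ).toContinuousLinearMap

lemma reInner_apply (A H : Matrix m m ℂ) : reInner A H = (Aᴴ * H).trace.re := rfl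

lemma gramEigenvalues_nonneg (A : Matrix m m ℂ) (i : m) : 0 ≤ gramEigenvalues A i :=
  eigenvalues_conjTranspose_mul_self_nonneg A i

lemma gramEigenvalues_le_sq_norm (A : Matrix m m ℂ) (i : m) : gramEigenvalues A i ≤ ‖A‖ ^ 2 := by
  have h := abs_eigenvalues_sub_le (posSemidef_conjTranspose_mul_self A).isHermitian 0 i
  rw [sub_zero, zero_smul, sub_zero, l2_opNorm_conjTranspose_mul_self, ← pow_two] at h
  exact (le_abs_self _).trans h

lemma sum_gramEigenvalues_rpow_nonneg (q : ℝ) (A : Matrix m m ℂ) :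
    0 ≤ ∑ i, gramEigenvalues A i ^ q :=
  Finset.sum_nonneg fun i _ => Real.rpow_nonneg (gramEigenvalues_nonneg A i) q

lemma lpnorm_nonneg (p : ℝ) (A : Matrix m m ℂ) : 0 ≤ lpnorm p A :=
  Real.rpow_nonneg (div_nonneg (sum_gramEigenvalues_rpow_nonneg _ A) (Nat.cast_nonneg _)) _

lemma card_rpow_mul_lpnorm [Nonempty m] (p : ℝ) (A : Matrix m m ℂ) :
    (Fintype.card m : ℝ) ^ (1 / p) * lpnorm p A =
      (∑ i, gramEigenvalues A i ^ (p / 2)) ^ (1 / p) := by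
  have hcard : (0 : ℝ) < Fintype.card m := by exact_mod_cast Fintype.card_pos
  rw [lpnorm, ← Real.mul_rpow hcard.le
    (div_nonneg (sum_gramEigenvalues_rpow_nonneg _ A) hcard.le), mul_div_cancel₀ _ hcard.ne']

lemma lpnorm_le_norm (hp : 0 < p) (A : Matrix m m ℂ) : lpnorm p A ≤ ‖A‖ := by
  have hsum : ∑ i, gramEigenvalues A i ^ (p / 2) ≤ ‖A‖ ^ p * Fintype.card m := by
    calc ∑ i, gramEigenvalues A i ^ (p / 2) ≤ ∑ _i : m, (‖A‖ ^ 2) ^ (p / 2) := by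
          gcongr with i
          · exact gramEigenvalues_nonneg A i
          · exact gramEigenvalues_le_sq_norm A i
      _ = ‖A‖ ^ p * Fintype.card m := by
          rw [Finset.sum_const, Finset.card_univ, nsmul_eq_mul, mul_comm,
            ← Real.rpow_natCast_mul (norm_nonneg A)]
          congr 2
          push_cast
          ring
  calc lpnorm p A ≤ (‖A‖ ^ p) ^ (1 / p) :=
        Real.rpow_le_rpow (div_nonneg (sum_gramEigenvalues_rpow_nonneg _ A) (Nat.cast_nonneg _))
          (div_le_of_le_mul₀ (Nat.cast_nonneg _) (by positivity) hsum) (by positivity)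
    _ = ‖A‖ := by rw [one_div, Real.rpow_rpow_inv (norm_nonneg A) hp.ne']

lemma norm_le_card_rpow_mul_lpnorm (hp : 0 < p) (A : Matrix m m ℂ) :
    ‖A‖ ≤ (Fintype.card m : ℝ) ^ (1 / p) * lpnorm p A := by
  set c := (Fintype.card m : ℝ) ^ (1 / p) * lpnorm p A with hcdef
  have hc : 0 ≤ c := mul_nonneg (by positivity) (lpnorm_nonneg p A)
  have hle (i : m) : gramEigenvalues A i ≤ c ^ 2 := by
    have : Nonempty m := ⟨i⟩
    calc gramEigenvalues A i = ((gramEigenvalues A i ^ (p / 2)) ^ (1 / p)) ^ 2 := by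
          rw [← Real.rpow_mul (gramEigenvalues_nonneg A i),
            ← Real.rpow_mul_natCast (gramEigenvalues_nonneg A i),
            show p / 2 * (1 / p) * (2 : ℕ) = 1 by push_cast; field_simp, Real.rpow_one]
      _ ≤ c ^ 2 := by
          rw [hcdef, card_rpow_mul_lpnorm]
          have hi := Real.rpow_nonneg (gramEigenvalues_nonneg A i) (p / 2)
          gcongr
          exact Finset.single_le_sum (f := fun j => gramEigenvalues A j ^ (p / 2))
            (fun j _ => Real.rpow_nonneg (gramEigenvalues_nonneg A j) _) (Finset.mem_univ i)
  have hgram : ‖Aᴴ * A‖ ≤ c ^ 2 :=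
    norm_le_of_eigenvalues_le (posSemidef_conjTranspose_mul_self A).isHermitian (sq_nonneg c)
      fun i => (abs_of_nonneg (gramEigenvalues_nonneg A i)).trans_le (hle i)
  rw [l2_opNorm_conjTranspose_mul_self, ← pow_two] at hgram
  exact le_of_sq_le_sq hgram hc

lemma norm_le_of_lpnorm_eq (hp : 0 < p) (h : lpnorm p A = lpnorm p B) :
    ‖A‖ ≤ (Fintype.card m : ℝ) ^ (1 / p) * ‖B‖ :=
  (norm_le_card_rpow_mul_lpnorm hp A).trans
    (mul_le_mul_of_nonneg_left (h.trans_le (lpnorm_le_norm hp B)) (by positivity))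

lemma lpnorm_conjStarAlgAut (p : ℝ) (g : unitaryGroup m ℂ) (A : Matrix m m ℂ) :
    lpnorm p (conjStarAlgAut ℂ _ g A) = lpnorm p A := by
  have h : gramEigenvalues (conjStarAlgAut ℂ _ g A) = gramEigenvalues A := by
    rw [IsHermitian.eigenvalues_eq_eigenvalues_iff, ← star_eq_conjTranspose, ← map_star, ← map_mul,
      conjStarAlgAut_apply, charpoly_mul_comm, ← mul_assoc, Unitary.coe_star_mul_self,
      one_mul, star_eq_conjTranspose]
  simp only [lpnorm, h]

lemma hasStrictFDerivAt_gram (A : Matrix m m ℂ) :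
    HasStrictFDerivAt (fun X : Matrix m m ℂ => Xᴴ * X)
      (Aᴴ • ContinuousLinearMap.id ℝ (Matrix m m ℂ) +
        MulOpposite.op A • (starL' ℝ : Matrix m m ℂ ≃L[ℝ] Matrix m m ℂ).toContinuousLinearMap) A :=
  (hasStrictFDerivAt_id A).star.mul' (hasStrictFDerivAt_id A)

lemma isLittleO_re_trace_gram (A : Matrix m m ℂ) :
    (fun x : Matrix m m ℂ × Matrix m m ℂ =>
      (x.1ᴴ * x.1 - x.2ᴴ * x.2).trace.re - 2 * reInner A (x.1 - x.2)) =o[𝓝 (A, A)]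
      fun x => x.1 - x.2 := by
  have h := ((reInner (1 : Matrix m m ℂ)).isBigO_comp _ _).trans_isLittleO
    (hasStrictFDerivAt_gram A).isLittleO
  refine h.congr_left fun x => ?_
  have hadj : ((x.1 - x.2)ᴴ * A).trace.re = reInner A (x.1 - x.2) := by
    rw [reInner_apply, ← conjTranspose_conjTranspose (Aᴴ * (x.1 - x.2)), trace_conjTranspose]
    simp
  rw [reInner_apply, conjTranspose_one, one_mul, trace_sub, Complex.sub_re]
  congr 1
  change (Aᴴ * (x.1 - x.2) + (x.1 - x.2)ᴴ * A).trace.re = _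
  rw [trace_add, Complex.add_re, hadj, two_mul, reInner_apply]

lemma hasStrictFDerivAt_sum_gramEigenvalues_rpow (q : ℝ) {r : ℝ} (hr : 0 < r)
    (hA : Aᴴ * A = r • 1) :
    HasStrictFDerivAt (fun X => ∑ i, gramEigenvalues X i ^ q)
      ((2 * (q * r ^ (q - 1))) • reInner A) A := by
  have hgram := hasStrictFDerivAt_gram A
  have htendsto : Tendsto (fun X : Matrix m m ℂ => Xᴴ * X) (𝓝 A) (𝓝 (r • 1)) :=
    hA ▸ hgram.continuousAt
  have h1 := (isLittleO_sum_eigenvalues (l := 𝓝 (A, A))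
    (fun x : Matrix m m ℂ × Matrix m m ℂ => (posSemidef_conjTranspose_mul_self x.1).isHermitian)
    (fun x => (posSemidef_conjTranspose_mul_self x.2).isHermitian)
    (Real.hasStrictDerivAt_rpow_const (Or.inl hr.ne') (p := q))
    (htendsto.comp continuous_fst.continuousAt)
    (htendsto.comp continuous_snd.continuousAt)).trans_isBigO hgram.isBigO_sub
  have h2 := (isLittleO_re_trace_gram A).const_mul_left (q * r ^ (q - 1))
  refine .of_isLittleO ((h1.add h2).congr_left fun x => ?_)
  simp only [gramEigenvalues, _root_.smul_apply, smul_eq_mul]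
  ring

lemma gramEigenvalues_of_gram_eq_smul_one {r : ℝ} (hA : Aᴴ * A = r • 1) :
    gramEigenvalues A = fun _ => r := by
  ext i
  have h := abs_eigenvalues_sub_le (posSemidef_conjTranspose_mul_self A).isHermitian r i
  exact sub_eq_zero.mp (abs_nonpos_iff.mp (h.trans_eq (by rw [hA, sub_self, norm_zero])))

theorem hasStrictFDerivAt_lpnorm [Nonempty m] (hp : 0 < p) {r : ℝ} (hr : 0 < r)
    (hA : Aᴴ * A = r • 1) :
    HasStrictFDerivAt (lpnorm p) ((Fintype.card m * √r)⁻¹ • reInner A) A := by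
  have hmean : (∑ i, gramEigenvalues A i ^ (p / 2)) * (Fintype.card m : ℝ)⁻¹ = r ^ (p / 2) := by
    rw [gramEigenvalues_of_gram_eq_smul_one hA, Finset.sum_const, Finset.card_univ, nsmul_eq_mul]
    field_simp
  have hscalar : 1 / p * (r ^ (p / 2)) ^ (1 / p - 1) * (Fintype.card m : ℝ)⁻¹ *
      (2 * (p / 2 * r ^ (p / 2 - 1))) = (Fintype.card m * √r)⁻¹ := by
    have hpow : (r ^ (p / 2)) ^ (1 / p - 1) * r ^ (p / 2 - 1) = (√r)⁻¹ := by
      rw [← Real.rpow_mul hr.le, ← Real.rpow_add hr, Real.sqrt_eq_rpow, ← Real.rpow_neg hr.le]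
      congr 1
      field_simp
      ring
    rw [mul_inv, ← hpow]
    field_simp
  have h := ((hasStrictFDerivAt_sum_gramEigenvalues_rpow (p / 2) hr hA).mul_const
    (Fintype.card m : ℝ)⁻¹).rpow_const (p := 1 / p) (Or.inl (by rw [hmean]; positivity))
  rw [hmean, smul_smul, smul_smul, hscalar] at h
  refine h.congr_of_eventuallyEq (.of_forall fun X => ?_)
  simp only [lpnorm, div_eq_mul_inv (∑ _, _)]

end LpNorm

section UnitarySpan

lemma mem_of_hasDerivAt_of_eventually_mem {E : Type*} [NormedAddCommGroup E] [NormedSpace ℝ E]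
    {W : Submodule ℝ E} (hW : IsClosed (W : Set E)) {γ : ℝ → E} {γ' : E} {t₀ : ℝ}
    (hγ : HasDerivAt γ γ' t₀) (hmem : ∀ᶠ t in 𝓝 t₀, γ t ∈ W) : γ' ∈ W :=
  hW.mem_of_tendsto hγ.tendsto_slope <| (hmem.filter_mono nhdsWithin_le_nhds).mono fun _ ht =>
    W.smul_mem _ (W.sub_mem ht hmem.self_of_nhds)

variable {A : Type*} [NormedRing A] [NormedAlgebra ℂ A] [StarRing A] [ContinuousStar A]
  [CompleteSpace A] [StarModule ℂ A]

open selfAdjoint in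
/-- Differentiating `exp (iθ) exp (itH)` in `t`, and the result in `θ`, at `0` yields `iH` and
`-H`. -/
lemma mem_of_eventually_unitary_mem {W : Submodule ℝ A} (hW : IsClosed (W : Set A))
    (h : ∀ᶠ u : unitary A in 𝓝 1, (u : A) ∈ W) (a : A) : a ∈ W := by
  let _ : NormedAlgebra ℝ A := .restrictScalars ℝ ℂ A
  have hself (H : selfAdjoint A) : Complex.I • (H : A) ∈ W ∧ (H : A) ∈ W := by
    let γ : A → ℝ → A := fun b t => NormedSpace.exp (t • (Complex.I • b))
    have hγ (b : A) : HasDerivAt (γ b) (Complex.I • b) 0 := by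
      simpa using hasDerivAt_exp_smul_const (𝕂 := ℝ) (Complex.I • b) (0 : ℝ)
    have hcoe (b : selfAdjoint A) (t : ℝ) : (expUnitary (t • b) : A) = γ b t := by
      rw [expUnitary_coe, selfAdjoint.val_smul, smul_comm]
    have hmem : ∀ᶠ θ in 𝓝 (0 : ℝ), ∀ᶠ t in 𝓝 (0 : ℝ), γ 1 θ * γ H t ∈ W := by
      have hcont : Continuous fun x : ℝ × ℝ =>
          expUnitary (x.1 • (1 : selfAdjoint A)) * expUnitary (x.2 • H) := by fun_prop
      have hprod : ∀ᶠ x in 𝓝 ((0, 0) : ℝ × ℝ), γ 1 x.1 * γ H x.2 ∈ W := by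
        filter_upwards [(hcont.tendsto' (0, 0) 1 (by simp)).eventually h] with x hx
        rwa [Submonoid.coe_mul, hcoe, hcoe] at hx
      exact hprod.curry_nhds
    have htangent : ∀ᶠ θ in 𝓝 (0 : ℝ), γ 1 θ * (Complex.I • (H : A)) ∈ W := by
      filter_upwards [hmem] with θ hθ
      exact mem_of_hasDerivAt_of_eventually_mem hW ((hγ H).const_mul (γ 1 θ)) hθ
    refine ⟨by simpa [γ] using htangent.self_of_nhds, ?_⟩
    have hneg := mem_of_hasDerivAt_of_eventually_mem hW
      ((hγ 1).mul_const (Complex.I • (H : A))) htangent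
    simpa [smul_smul] using hneg
  rw [← realPart_add_I_smul_imaginaryPart a]
  exact W.add_mem (hself _).2 (hself _).1

lemma span_coe_unitaryGroup_eq_top {m : Type*} [Fintype m] [DecidableEq m]
    {O : Set (unitaryGroup m ℂ)} (hO : O ∈ 𝓝 1) :
    Submodule.span ℝ (Subtype.val '' O : Set (Matrix m m ℂ)) = ⊤ :=
  eq_top_iff.mpr fun M _ => mem_of_eventually_unitary_mem (Submodule.closed_of_finiteDimensional _)
    (eventually_of_mem hO fun _ hV => Submodule.subset_span (Set.mem_image_of_mem _ hV)) M

end UnitarySpan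

section LittleO

variable {ι E m n : Type*} [SeminormedAddCommGroup E] {l : Filter ι} {g : ι → E}

lemma isLittleO_of_entries [Fintype m] [Fintype n] [DecidableEq n] {F : ι → Matrix m n ℂ}
    (h : ∀ i j, (fun t => F t i j) =o[l] g) : F =o[l] g := by
  classical
  have hsingle (i : m) (j : n) : (fun t => single i j (F t i j)) =o[l] g := by
    refine (((h i j).norm_left.const_mul_left ‖single i j (1 : ℂ)‖).congr_left
      fun t => ?_).of_norm_left
    rw [mul_comm, ← norm_smul, smul_single, smul_eq_mul, mul_one]
  refine (IsLittleO.sum (s := Finset.univ) fun i _ => IsLittleO.sum (s := Finset.univ)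
    fun j _ => hsingle i j).congr_left fun t => ?_
  simpa only [Finset.sum_apply] using (matrix_eq_sum_single (F t)).symm

lemma isLittleO_of_reInner [Fintype m] [DecidableEq m] {F : ι → Matrix m m ℂ}
    {s : Set (Matrix m m ℂ)} (hs : Submodule.span ℝ s = ⊤)
    (h : ∀ V ∈ s, (fun t => reInner V (F t)) =o[l] g) : F =o[l] g := by
  have hall (M : Matrix m m ℂ) : (fun t => reInner M (F t)) =o[l] g := by
    have hM : M ∈ Submodule.span ℝ s := hs ▸ Submodule.mem_top
    induction hM using Submodule.span_induction with
    | mem V hV => exact h V hV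
    | zero => simpa [reInner_apply] using isLittleO_zero g l
    | add M N _ _ hM hN => simpa [reInner_apply, add_mul] using hM.add hN
    | smul c M _ hM => simpa [reInner_apply] using hM.const_mul_left c
  refine isLittleO_of_entries fun i j => ?_
  have hre : (fun t => (F t i j).re) =o[l] g := by
    simpa [reInner_apply, trace_single_mul] using hall (single i j 1)
  have him : (fun t => (F t i j).im) =o[l] g := by
    simpa [reInner_apply, trace_single_mul] using hall (single i j Complex.I)
  refine ((Complex.isLittleO_ofReal_left.mpr hre).add
    ((Complex.isLittleO_ofReal_left.mpr him).const_mul_left Complex.I)).congr_left fun t => ?_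
  rw [mul_comm, Complex.re_add_im]

lemma isLittleO_sub_of_isIdempotentElem {R : Type*} [NormedRing R] {P Q : ι → R} {e : R}
    (hP : Tendsto P l (𝓝 e)) (hQ : Tendsto Q l (𝓝 e)) (hPi : ∀ᶠ t in l, IsIdempotentElem (P t))
    (hQi : ∀ᶠ t in l, IsIdempotentElem (Q t)) :
    (fun t => (P t - Q t) - e * (P t - Q t) - (P t - Q t) * e) =o[l] fun t => P t - Q t := by
  have hO := isBigO_refl (fun t => P t - Q t) l
  have hPo : (fun t => P t - e) =o[l] fun _ => (1 : ℝ) :=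
    (isLittleO_one_iff ℝ).mpr (tendsto_sub_nhds_zero_iff.mpr hP)
  have hQo : (fun t => Q t - e) =o[l] fun _ => (1 : ℝ) :=
    (isLittleO_one_iff ℝ).mpr (tendsto_sub_nhds_zero_iff.mpr hQ)
  have h := (hPo.mul_isBigO hO.norm_right).add ((hO.norm_right.mul_isLittleO hQo).congr_right
    fun t => mul_comm _ _)
  simp only [one_mul] at h
  refine (h.of_norm_right).congr' ?_ .rfl
  filter_upwards [hPi, hQi] with t hPt hQt
  have hdiff : P t - Q t = P t * (P t - Q t) + (P t - Q t) * Q t := by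
    rw [mul_sub, sub_mul, hPt.eq, hQt.eq]
    abel
  nth_rw 3 [hdiff]
  noncomm_ring

end LittleO

section UnitaryConnected

open selfAdjoint

lemma expUnitary_smul_one {A : Type*} [CStarAlgebra A] (θ : ℝ) :
    (expUnitary (θ • (1 : selfAdjoint A)) : A) = algebraMap ℂ A (Circle.exp θ) := by
  rw [expUnitary_coe, selfAdjoint.val_smul, Circle.coe_exp, Complex.exp_eq_exp_ℂ,
    NormedSpace.algebraMap_exp_comm, Algebra.algebraMap_eq_smul_one, selfAdjoint.val_one,
    mul_comm, mul_smul, Complex.coe_smul]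

lemma joined_one_of_notMem_spectrum {A : Type*} [CStarAlgebra A] {u : unitary A} {z : Circle}
    (hz : (z : ℂ) ∉ spectrum ℂ (u : A)) : Joined 1 u := by
  obtain ⟨θ, hθ⟩ := Circle.exp_surjective (-z)
  set v := expUnitary (θ • (1 : selfAdjoint A)) with hv
  refine (joined_one_expUnitary (θ • 1)).trans (Unitary.joined _ _ ?_)
  rw [Unitary.norm_sub_eq]
  refine (Unitary.norm_sub_one_lt_two_iff (SetLike.coe_mem _)).mpr fun hmem => hz ?_
  have hrotate : Circle.toUnits (-z) • ((u * star v : unitary A) : A) = u := by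
    rw [Units.smul_def, Circle.toUnits_apply, Units.val_mk0, ← hθ, Algebra.smul_def,
      Submonoid.coe_mul, ← Algebra.left_comm, ← expUnitary_smul_one, ← hv,
      Unitary.coe_mul_star_self, mul_one]
  have hmem' := hrotate ▸
    spectrum.smul_mem_smul_iff.mpr (hmem : (-1 : ℂ) ∈ spectrum ℂ ((u * star v : unitary A) : A))
  simpa [Units.smul_def] using hmem'

lemma pathConnectedSpace_unitaryGroup (m : Type*) [Fintype m] [DecidableEq m] :
    PathConnectedSpace (unitaryGroup m ℂ) := by
  have hone (u : unitaryGroup m ℂ) : Joined 1 u := by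
    have hcircle : (Set.univ : Set Circle).Infinite :=
      isPreconnected_univ.infinite_of_nontrivial
        ⟨1, trivial, -1, trivial, (Circle.neg_ne_self 1).symm⟩
    obtain ⟨z, -, hz⟩ := hcircle.exists_notMem_finite
      ((finite_spectrum (u : Matrix m m ℂ)).preimage Circle.coe_injective.injOn)
    exact joined_one_of_notMem_spectrum hz
  exact ⟨⟨1⟩, fun u v => (hone u).symm.trans (hone v)⟩

lemma closure_eq_top_of_mem_nhds_one {G : Type*} [Group G] [TopologicalSpace G]
    [IsTopologicalGroup G] [ConnectedSpace G] {N : Set G} (hN : N ∈ 𝓝 1) :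
    Subgroup.closure N = ⊤ := by
  have hopen := Subgroup.isOpen_of_mem_nhds _ (mem_of_superset hN Subgroup.subset_closure)
  have h := IsClopen.eq_univ ⟨Subgroup.isClosed_of_isOpen _ hopen, hopen⟩ ⟨1, one_mem _⟩
  exact SetLike.coe_injective h

end UnitaryConnected

section Conjugacy

open Polynomial

variable {𝕜 n : Type*} [RCLike 𝕜] [Fintype n] [DecidableEq n] {P Q : Matrix n n 𝕜}

lemma charpoly_eq_of_isStarProjection (hP : IsStarProjection P) {k : ℕ} (hk : P.trace = k) :
    P.charpoly = (X - 1) ^ k * X ^ (Fintype.card n - k) := by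
  have hherm : P.IsHermitian := hP.isSelfAdjoint
  have heig (i : n) : (hherm.eigenvalues i : 𝕜) = if hherm.eigenvalues i = 1 then 1 else 0 := by
    have h01 := hP.isIdempotentElem.spectrum_subset ℝ (hherm.eigenvalues_mem_spectrum_real i)
    simp only [Set.mem_insert_iff, Set.mem_singleton_iff] at h01
    rcases h01 with h | h <;> simp [h]
  have hcard : (Finset.univ.filter fun i => hherm.eigenvalues i = 1).card = k := by
    rw [hherm.trace_eq_sum_eigenvalues] at hk
    simp only [heig, Finset.sum_boole] at hk
    exact_mod_cast hk
  have hcompl : (Finset.univ.filter fun i => ¬ hherm.eigenvalues i = 1).card =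
      Fintype.card n - k := by
    rw [← hcard, ← Finset.card_compl, Finset.compl_filter]
  simp only [hherm.charpoly_eq, heig, apply_ite, Finset.prod_ite, Finset.prod_const, C_0, C_1,
    sub_zero, hcompl, hcard]

lemma exists_conjStarAlgAut_eq_of_trace_eq (hP : IsStarProjection P) (hQ : IsStarProjection Q)
    {k : ℕ} (hPk : P.trace = k) (hQk : Q.trace = k) :
    ∃ g : unitaryGroup n 𝕜, conjStarAlgAut 𝕜 _ g P = Q := by
  have hPh : P.IsHermitian := hP.isSelfAdjoint
  have hQh : Q.IsHermitian := hQ.isSelfAdjoint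
  have heig := (hPh.eigenvalues_eq_eigenvalues_iff hQh).mpr <|
    (charpoly_eq_of_isStarProjection hP hPk).trans (charpoly_eq_of_isStarProjection hQ hQk).symm
  refine ⟨hQh.eigenvectorUnitary * star hPh.eigenvectorUnitary, ?_⟩
  rw [map_mul, StarAlgEquiv.mul_apply, hPh.conjStarAlgAut_star_eigenvectorUnitary, heig,
    ← hQh.spectral_theorem]

end Conjugacy

section Norm

variable {A : Type*} [NormedRing A] [StarRing A] [CStarRing A] [NormedAlgebra ℂ A]

lemma norm_conjStarAlgAut (u : unitary A) (a : A) :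
    ‖conjStarAlgAut ℂ _ u a‖ = ‖a‖ := by
  rw [conjStarAlgAut_apply, ← Unitary.coe_star, CStarRing.norm_mul_coe_unitary,
    CStarRing.norm_coe_unitary_mul]

lemma norm_conjStarAlgAut_sub_le (u : unitary A) (a : A) :
    ‖conjStarAlgAut ℂ _ u a - a‖ ≤ 2 * ‖a‖ * ‖(u : A) - 1‖ := by
  have hcomm : (conjStarAlgAut ℂ _ u a - a) * u = (u - 1) * a - a * (u - 1) := by
    rw [conjStarAlgAut_apply, sub_mul, mul_assoc _ (star _), Unitary.coe_star_mul_self]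
    noncomm_ring
  rw [← CStarRing.norm_mul_coe_unitary _ u, hcomm]
  refine (norm_sub_le _ _).trans ?_
  linarith [norm_mul_le ((u : A) - 1) a, norm_mul_le a ((u : A) - 1)]

end Norm

section HalfProjections

lemma trace_fromBlocks {m n R : Type*} [Fintype m] [Fintype n] [AddCommMonoid R]
    (A : Matrix m m R) (B : Matrix m n R) (C : Matrix n m R) (D : Matrix n n R) :
    (fromBlocks A B C D).trace = A.trace + D.trace := by
  simp [trace]

variable {m : Type*} {P Q Δ : Matrix (m ⊕ m) (m ⊕ m) ℂ} {V : Matrix m m ℂ}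

section Fintype

variable [Fintype m]

/-- Projections of normalized trace `1/2`; the trace is expressed without normalization. -/
structure IsHalfProj (P : Matrix (m ⊕ m) (m ⊕ m) ℂ) : Prop where
  isStarProjection : IsStarProjection P
  trace_eq : P.trace = Fintype.card m

lemma isHalfProj_iff :
    IsHalfProj P ↔ Pᴴ = P ∧ P * P = P ∧ P.trace = Fintype.card m :=
  ⟨fun h => ⟨h.isStarProjection.isSelfAdjoint, h.isStarProjection.isIdempotentElem, h.trace_eq⟩,
    fun ⟨hsa, hidem, htr⟩ => ⟨⟨hidem, hsa⟩, htr⟩⟩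

lemma IsHalfProj.isHermitian_sub (hP : IsHalfProj P) (hQ : IsHalfProj Q) :
    (P - Q).IsHermitian :=
  hP.isStarProjection.isSelfAdjoint.sub hQ.isStarProjection.isSelfAdjoint

end Fintype

variable [DecidableEq m]

variable (m) in
/-- The projection onto the first of the two blocks. -/
def fstProj : Matrix (m ⊕ m) (m ⊕ m) ℂ :=
  fromBlocks 1 0 0 0

/-- For unitary `V`, the half projection at angle `π/4` from `fstProj` given by the graph of
`Vᴴ`. -/
noncomputable def diagProj (V : Matrix m m ℂ) : Matrix (m ⊕ m) (m ⊕ m) ℂ :=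
  (2 : ℂ)⁻¹ • fromBlocks 1 V Vᴴ 1

lemma diagProj_sub_fstProj (V : Matrix m m ℂ) :
    diagProj V - fstProj m = (2 : ℂ)⁻¹ • fromBlocks (-1) V Vᴴ 1 := by
  rw [diagProj, fstProj, sub_eq_iff_eq_add, fromBlocks_smul, fromBlocks_smul, fromBlocks_add]
  congr 1 <;> module

lemma conjTranspose_inv_sqrt_two_smul_fromBlocks (V : Matrix m m ℂ) :
    ((√2 : ℂ)⁻¹ • (fromBlocks V V 1 (-1) : Matrix (m ⊕ m) (m ⊕ m) ℂ))ᴴ =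
      (√2 : ℂ)⁻¹ • fromBlocks Vᴴ 1 Vᴴ (-1) := by
  simp [conjTranspose_smul, fromBlocks_conjTranspose]

lemma continuous_diagProj : Continuous (diagProj : Matrix m m ℂ → Matrix (m ⊕ m) (m ⊕ m) ℂ) :=
  (continuous_const.matrix_fromBlocks continuous_id continuous_id.matrix_conjTranspose
    continuous_const).const_smul (2 : ℂ)⁻¹

variable [Fintype m]

lemma IsHalfProj.conjStarAlgAut (hP : IsHalfProj P) (g : unitaryGroup (m ⊕ m) ℂ) :
    IsHalfProj (conjStarAlgAut ℂ _ g P) where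
  isStarProjection := hP.isStarProjection.map _
  trace_eq := by
    rw [conjStarAlgAut_apply, trace_mul_cycle, Unitary.coe_star_mul_self, one_mul,
      hP.trace_eq]

lemma isHalfProj_fstProj : IsHalfProj (fstProj m) where
  isStarProjection := by
    simp [isStarProjection_iff, IsIdempotentElem, IsSelfAdjoint, star_eq_conjTranspose, fstProj,
      fromBlocks_conjTranspose, fromBlocks_multiply]
  trace_eq := by simp [fstProj, trace_fromBlocks]

lemma conjTranspose_mul_self_diagProj_sub_fstProj (hV : V ∈ unitaryGroup m ℂ) :
    (diagProj V - fstProj m)ᴴ * (diagProj V - fstProj m) = (2⁻¹ : ℝ) • 1 := by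
  rw [diagProj_sub_fstProj, conjTranspose_smul, fromBlocks_conjTranspose, smul_mul_smul_comm,
    fromBlocks_multiply, conjTranspose_conjTranspose, ← star_eq_conjTranspose V,
    mem_unitaryGroup_iff.mp hV, mem_unitaryGroup_iff'.mp hV, ← fromBlocks_one, fromBlocks_smul,
    fromBlocks_smul]
  congr 1
  · simp only [conjTranspose_neg, conjTranspose_one, neg_mul_neg, mul_one, star_inv₀, star_ofNat]
    module
  · simp
  · simp
  · simp only [conjTranspose_one, mul_one, star_inv₀, star_ofNat]
    module

lemma sub_fstProj_mul_sub_mul_fstProj (Δ : Matrix (m ⊕ m) (m ⊕ m) ℂ) :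
    Δ - fstProj m * Δ - Δ * fstProj m =
      fromBlocks (-Δ.toBlocks₁₁) 0 0 Δ.toBlocks₂₂ := by
  conv_lhs => rw [← fromBlocks_toBlocks Δ]
  rw [fstProj, fromBlocks_multiply, fromBlocks_multiply, sub_sub, fromBlocks_add, sub_eq_add_neg,
    fromBlocks_neg, fromBlocks_add]
  simp

lemma reInner_diagProj_sub_fstProj (hΔ : Δ.IsHermitian) (V : Matrix m m ℂ) :
    reInner (diagProj V - fstProj m) Δ =
      reInner V Δ.toBlocks₁₂ +
        2⁻¹ * reInner 1 (Δ - fstProj m * Δ - Δ * fstProj m) := by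
  have hsymm : (V * Δ.toBlocks₂₁).trace.re = (Vᴴ * Δ.toBlocks₁₂).trace.re := by
    have hblock : Δ.toBlocks₂₁ = Δ.toBlocks₁₂ᴴ := by
      ext i j
      exact (hΔ.apply _ _).symm
    rw [hblock, ← Complex.conj_re, ← RCLike.star_def, ← trace_conjTranspose, conjTranspose_mul,
      conjTranspose_conjTranspose, trace_mul_comm]
  have htwo : star (2 : ℂ)⁻¹ = ((2⁻¹ : ℝ) : ℂ) := by simp
  rw [sub_fstProj_mul_sub_mul_fstProj, diagProj_sub_fstProj]
  simp only [reInner_apply]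
  conv_lhs => rw [← fromBlocks_toBlocks Δ]
  simp only [conjTranspose_smul, htwo, fromBlocks_conjTranspose,
    conjTranspose_conjTranspose, conjTranspose_neg, conjTranspose_one, smul_mul_assoc,
    fromBlocks_multiply, neg_mul, one_mul, trace_smul, trace_fromBlocks, trace_add, trace_neg,
    smul_eq_mul, Complex.re_ofReal_mul, Complex.add_re, Complex.neg_re, hsymm]
  ring

lemma inv_sqrt_two_mul_self : ((√2 : ℂ)⁻¹ * (√2 : ℂ)⁻¹) = 2⁻¹ := by
  rw [← mul_inv, ← Complex.ofReal_mul, Real.mul_self_sqrt (by norm_num), Complex.ofReal_ofNat]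

/-- The block Hadamard rotation twisted by `V`. It moves the pair `(fstProj, diagProj 1)` to the
pair `(diagProj V, fstProj)`. -/
noncomputable def hadamardUnitary (V : unitaryGroup m ℂ) : unitaryGroup (m ⊕ m) ℂ :=
  ⟨(√2 : ℂ)⁻¹ • fromBlocks V V 1 (-1), by
    rw [mem_unitaryGroup_iff, star_eq_conjTranspose, conjTranspose_inv_sqrt_two_smul_fromBlocks,
      smul_mul_smul_comm, inv_sqrt_two_mul_self, fromBlocks_multiply, ← star_eq_conjTranspose,
      mem_unitaryGroup_iff.mp V.2, fromBlocks_smul, ← fromBlocks_one]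
    congr 1
    · module
    · simp
    · simp
    · simp only [mul_one, neg_mul_neg]
      module⟩

lemma conjStarAlgAut_hadamardUnitary (V : unitaryGroup m ℂ) (P : Matrix (m ⊕ m) (m ⊕ m) ℂ) :
    conjStarAlgAut ℂ _ (hadamardUnitary V) P =
      (2 : ℂ)⁻¹ • (fromBlocks V V 1 (-1) * P * fromBlocks Vᴴ 1 Vᴴ (-1)) := by
  rw [conjStarAlgAut_apply, hadamardUnitary, star_eq_conjTranspose,
    conjTranspose_inv_sqrt_two_smul_fromBlocks, smul_mul_assoc, smul_mul_smul_comm,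
    inv_sqrt_two_mul_self]

lemma conjStarAlgAut_hadamardUnitary_fstProj (V : unitaryGroup m ℂ) :
    conjStarAlgAut ℂ _ (hadamardUnitary V) (fstProj m) = diagProj V := by
  rw [conjStarAlgAut_hadamardUnitary, fstProj, diagProj, fromBlocks_multiply, fromBlocks_multiply,
    ← star_eq_conjTranspose]
  simp

lemma conjStarAlgAut_hadamardUnitary_diagProj_one (V : unitaryGroup m ℂ) :
    conjStarAlgAut ℂ _ (hadamardUnitary V) (diagProj 1) = fstProj m := by
  rw [conjStarAlgAut_hadamardUnitary, fstProj, diagProj, mul_smul_comm, smul_mul_assoc,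
    conjTranspose_one, fromBlocks_multiply, fromBlocks_multiply, ← star_eq_conjTranspose,
    fromBlocks_smul, fromBlocks_smul]
  congr 1
  · simp only [mul_one, add_mul, mem_unitaryGroup_iff.mp V.2]
    module
  all_goals simp

lemma isHalfProj_diagProj (V : unitaryGroup m ℂ) : IsHalfProj (diagProj (V : Matrix m m ℂ)) :=
  conjStarAlgAut_hadamardUnitary_fstProj V ▸ isHalfProj_fstProj.conjStarAlgAut _

end HalfProjections

section LocalRigidity

variable {ι m : Type*} [Fintype m] [DecidableEq m] {p : ℝ} {l : Filter ι}
  {P Q : ι → Matrix (m ⊕ m) (m ⊕ m) ℂ}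

lemma isLittleO_reInner_diagProj_sub_fstProj [Nonempty m] (hp : 0 < p)
    (hP : Tendsto P l (𝓝 (fstProj m))) (hQ : Tendsto Q l (𝓝 (fstProj m))) {V : Matrix m m ℂ}
    (hV : V ∈ unitaryGroup m ℂ)
    (h : ∀ᶠ t in l, lpnorm p (diagProj V - P t) = lpnorm p (diagProj V - Q t)) :
    (fun t => reInner (diagProj V - fstProj m) (P t - Q t)) =o[l] fun t => P t - Q t := by
  set A := diagProj V - fstProj m with hA
  have hderiv := (hasStrictFDerivAt_lpnorm hp (by norm_num)
    (conjTranspose_mul_self_diagProj_sub_fstProj hV)).isLittleO.comp_tendsto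
    ((tendsto_const_nhds.sub hQ).prodMk_nhds (tendsto_const_nhds.sub hP) :
      Tendsto (fun t => (diagProj V - Q t, diagProj V - P t)) l (𝓝 (A, A)))
  have hc : ((Fintype.card (m ⊕ m) : ℝ) * √2⁻¹)⁻¹ ≠ 0 := by positivity
  refine (isLittleO_const_mul_left_iff hc).mp (hderiv.neg_left.congr' ?_ ?_)
  · filter_upwards [h] with t ht
    simp [ht, hA]
  · exact .of_forall fun t => by simp

lemma isLittleO_sub_self_of_lpnorm_diagProj_sub_eq [Nonempty m] (hp : 0 < p)
    (hP : Tendsto P l (𝓝 (fstProj m))) (hQ : Tendsto Q l (𝓝 (fstProj m)))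
    (hPi : ∀ᶠ t in l, IsHalfProj (P t)) (hQi : ∀ᶠ t in l, IsHalfProj (Q t))
    {O : Set (unitaryGroup m ℂ)} (hO : O ∈ 𝓝 1)
    (h : ∀ V ∈ O, ∀ᶠ t in l,
      lpnorm p (diagProj (V : Matrix m m ℂ) - P t) = lpnorm p (diagProj V - Q t)) :
    (fun t => P t - Q t) =o[l] fun t => P t - Q t := by
  set Δ := fun t => P t - Q t
  have hherm : ∀ᶠ t in l, (Δ t).IsHermitian := by
    filter_upwards [hPi, hQi] with t hPt hQt using hPt.isHermitian_sub hQt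
  have hdiag : (fun t => fromBlocks (-(Δ t).toBlocks₁₁) 0 0 (Δ t).toBlocks₂₂) =o[l] Δ := by
    simpa only [sub_fstProj_mul_sub_mul_fstProj] using isLittleO_sub_of_isIdempotentElem hP hQ
      (hPi.mono fun _ ht => ht.isStarProjection.isIdempotentElem)
      (hQi.mono fun _ ht => ht.isStarProjection.isIdempotentElem)
  have hoff : (fun t => (Δ t).toBlocks₁₂) =o[l] Δ := by
    refine isLittleO_of_reInner (span_coe_unitaryGroup_eq_top hO) ?_
    rintro _ ⟨V, hV, rfl⟩
    refine ((isLittleO_reInner_diagProj_sub_fstProj hp hP hQ V.2 (h V hV)).sub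
      ((((reInner 1).isBigO_comp _ _).trans_isLittleO hdiag).const_mul_left 2⁻¹)).congr' ?_ .rfl
    filter_upwards [hherm] with t ht
    rw [reInner_diagProj_sub_fstProj ht, sub_fstProj_mul_sub_mul_fstProj, add_sub_cancel_right]
  have hentry {k : Type _} [Fintype k] [DecidableEq k] {F : ι → Matrix k k ℂ} (hF : F =o[l] Δ)
      (i j : k) : (fun t => F t i j) =o[l] Δ := by
    exact ((entryLinearMap ℂ ℂ i j).toContinuousLinearMap.isBigO_comp F l).trans_isLittleO hF
  refine isLittleO_of_entries ?_
  rintro (i | i) (j | j)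
  · simpa [toBlocks₁₁] using hentry hdiag (.inl i) (.inl j)
  · exact hentry hoff i j
  · refine (hentry hoff j i).norm_left.congr' ?_ .rfl |>.of_norm_left
    filter_upwards [hherm] with t ht
    rw [← ht.apply (.inr i) (.inl j), norm_star]
    rfl
  · exact hentry hdiag (.inr i) (.inr j)

theorem eventuallyEq_of_lpnorm_diagProj_sub_eq (hp : 0 < p)
    (hP : Tendsto P l (𝓝 (fstProj m))) (hQ : Tendsto Q l (𝓝 (fstProj m)))
    (hPi : ∀ᶠ t in l, IsHalfProj (P t)) (hQi : ∀ᶠ t in l, IsHalfProj (Q t))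
    {O : Set (unitaryGroup m ℂ)} (hO : O ∈ 𝓝 1)
    (h : ∀ V ∈ O, ∀ᶠ t in l,
      lpnorm p (diagProj (V : Matrix m m ℂ) - P t) = lpnorm p (diagProj V - Q t)) :
    P =ᶠ[l] Q := by
  cases isEmpty_or_nonempty m
  · exact .of_forall fun _ => Subsingleton.elim _ _
  · have hself := isLittleO_sub_self_of_lpnorm_diagProj_sub_eq hp hP hQ hPi hQi hO h
    filter_upwards [hself.def (c := 2⁻¹) (by norm_num)] with t ht
    exact sub_eq_zero.mp (norm_le_zero_iff.mp (by linarith))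

end LocalRigidity

section Isometries

variable {m : Type*} [Fintype m] [DecidableEq m] {p : ℝ}
  {φ : Matrix (m ⊕ m) (m ⊕ m) ℂ → Matrix (m ⊕ m) (m ⊕ m) ℂ}

/-- Self-maps of the set of half projections preserving the `L^p`-distance. They are encoded as
maps on all matrices, of which only the values at half projections matter. -/
structure IsLpIsometry (p : ℝ) (φ : Matrix (m ⊕ m) (m ⊕ m) ℂ → Matrix (m ⊕ m) (m ⊕ m) ℂ) :
    Prop where
  isHalfProj {P} : IsHalfProj P → IsHalfProj (φ P)
  lpnorm_sub {P Q} : IsHalfProj P → IsHalfProj Q → lpnorm p (φ P - φ Q) = lpnorm p (P - Q)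

lemma isLpIsometry_iff :
    IsLpIsometry p φ ↔
      (∀ P : Matrix (m ⊕ m) (m ⊕ m) ℂ, Pᴴ = P → P * P = P → P.trace = Fintype.card m →
        (φ P)ᴴ = φ P ∧ φ P * φ P = φ P ∧ (φ P).trace = Fintype.card m) ∧
      ∀ P Q : Matrix (m ⊕ m) (m ⊕ m) ℂ, Pᴴ = P → P * P = P → P.trace = Fintype.card m →
        Qᴴ = Q → Q * Q = Q → Q.trace = Fintype.card m →
        lpnorm p (φ P - φ Q) = lpnorm p (P - Q) := by
  have hstruct : IsLpIsometry p φ ↔ (∀ P, IsHalfProj P → IsHalfProj (φ P)) ∧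
      ∀ P Q, IsHalfProj P → IsHalfProj Q → lpnorm p (φ P - φ Q) = lpnorm p (P - Q) :=
    ⟨fun h => ⟨fun _ => h.1, fun _ _ => h.2⟩, fun h => ⟨h.1 _, h.2 _ _⟩⟩
  simp only [hstruct, isHalfProj_iff, and_imp]

variable (m) in
/-- The projections whose pointwise fixing forces an isometry to be the identity: the first
coordinate projection and the half projections at angle `π/4` from it. -/
def frame : Set (Matrix (m ⊕ m) (m ⊕ m) ℂ) :=
  insert (fstProj m) (diagProj '' unitaryGroup m ℂ)

/-- The conjugate of a map on matrices by the inner automorphism of the unitary `g`. -/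
noncomputable def conjMap (g : unitaryGroup (m ⊕ m) ℂ)
    (φ : Matrix (m ⊕ m) (m ⊕ m) ℂ → Matrix (m ⊕ m) (m ⊕ m) ℂ) :
    Matrix (m ⊕ m) (m ⊕ m) ℂ → Matrix (m ⊕ m) (m ⊕ m) ℂ :=
  fun P => conjStarAlgAut ℂ _ g⁻¹ (φ (conjStarAlgAut ℂ _ g P))

lemma conjMap_apply_eq_self_iff {g : unitaryGroup (m ⊕ m) ℂ} {P : Matrix (m ⊕ m) (m ⊕ m) ℂ} :
    conjMap g φ P = P ↔ φ (conjStarAlgAut ℂ _ g P) = conjStarAlgAut ℂ _ g P := by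
  rw [conjMap, map_inv, ← StarAlgEquiv.symm_apply_eq]
  rfl

lemma conjMap_one (φ : Matrix (m ⊕ m) (m ⊕ m) ℂ → Matrix (m ⊕ m) (m ⊕ m) ℂ) :
    conjMap 1 φ = φ := by
  funext P
  rw [conjMap, inv_one, map_one, StarAlgEquiv.one_apply, StarAlgEquiv.one_apply]

lemma conjMap_mul (g h : unitaryGroup (m ⊕ m) ℂ)
    (φ : Matrix (m ⊕ m) (m ⊕ m) ℂ → Matrix (m ⊕ m) (m ⊕ m) ℂ) :
    conjMap (g * h) φ = conjMap h (conjMap g φ) := by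
  funext P
  simp only [conjMap, _root_.mul_inv_rev, map_mul, StarAlgEquiv.mul_apply]

lemma IsLpIsometry.conjMap (hφ : IsLpIsometry p φ) (g : unitaryGroup (m ⊕ m) ℂ) :
    IsLpIsometry p (conjMap g φ) where
  isHalfProj hP := (hφ.isHalfProj (hP.conjStarAlgAut g)).conjStarAlgAut g⁻¹
  lpnorm_sub hP hQ := by
    rw [_root_.conjMap, _root_.conjMap, ← map_sub, lpnorm_conjStarAlgAut,
      hφ.lpnorm_sub (hP.conjStarAlgAut g) (hQ.conjStarAlgAut g), ← map_sub, lpnorm_conjStarAlgAut]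

lemma eventually_fixes_near_fstProj (hp : 0 < p) {O : Set (unitaryGroup m ℂ)} (hO : O ∈ 𝓝 1) :
    ∀ᶠ Q in 𝓝 (fstProj m), ∀ φ, IsLpIsometry p φ → φ (fstProj m) = fstProj m →
      (∀ V ∈ O, φ (diagProj V) = diagProj (V : Matrix m m ℂ)) → IsHalfProj Q → φ Q = Q := by
  let l := comap (Prod.fst : _ × (Matrix (m ⊕ m) (m ⊕ m) ℂ → _) → _) (𝓝 (fstProj m)) ⊓
    𝓟 {x | IsLpIsometry p x.2 ∧ x.2 (fstProj m) = fstProj m ∧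
      (∀ V ∈ O, x.2 (diagProj V) = diagProj (V : Matrix m m ℂ)) ∧ IsHalfProj x.1}
  have hl : ∀ᶠ x in l, IsLpIsometry p x.2 ∧ x.2 (fstProj m) = fstProj m ∧
      (∀ V ∈ O, x.2 (diagProj V) = diagProj (V : Matrix m m ℂ)) ∧ IsHalfProj x.1 :=
    mem_inf_of_right (mem_principal_self _)
  have hfst : Tendsto Prod.fst l (𝓝 (fstProj m)) := tendsto_comap.mono_left inf_le_left
  have happ : Tendsto (fun x => x.2 x.1) l (𝓝 (fstProj m)) := by
    have hbound := (tendsto_iff_norm_sub_tendsto_zero.mp hfst).const_mul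
      ((Fintype.card (m ⊕ m) : ℝ) ^ (1 / p))
    rw [mul_zero] at hbound
    refine tendsto_iff_norm_sub_tendsto_zero.mpr (squeeze_zero' (.of_forall fun _ => norm_nonneg _)
      ?_ hbound)
    filter_upwards [hl] with x ⟨hφ, hE, _, hQ⟩
    have h := norm_le_of_lpnorm_eq hp (hφ.lpnorm_sub hQ isHalfProj_fstProj)
    rwa [hE] at h
  have heq := eventuallyEq_of_lpnorm_diagProj_sub_eq hp happ hfst
    (hl.mono fun _ h => h.1.isHalfProj h.2.2.2) (hl.mono fun _ h => h.2.2.2) hO fun V hV => by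
      filter_upwards [hl] with x ⟨hφ, _, hfix, hQ⟩
      rw [← hφ.lpnorm_sub (isHalfProj_diagProj V) hQ, hfix V hV]
  filter_upwards [eventually_comap.mp (eventually_inf_principal.mp heq)] with Q hQ φ hφ hE hV hQh
  exact hQ (Q, φ) rfl ⟨hφ, hE, hV, hQh⟩

lemma exists_fixes_near_frame (hp : 0 < p) :
    ∃ δ > 0, ∀ φ, IsLpIsometry p φ → (∀ F ∈ frame m, φ F = F) →
      ∀ F ∈ frame m, ∀ Q, IsHalfProj Q → ‖Q - F‖ < δ → φ Q = Q := by
  obtain ⟨δ₁, hδ₁, hfst⟩ :=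
    Metric.eventually_nhds_iff.mp (eventually_fixes_near_fstProj (m := m) hp univ_mem)
  have hO : {V : unitaryGroup m ℂ | dist (diagProj (V : Matrix m m ℂ)) (diagProj 1) < δ₁} ∈ 𝓝 1 :=
    (continuous_diagProj.comp continuous_subtype_val).tendsto (1 : unitaryGroup m ℂ)
      (Metric.ball_mem_nhds _ hδ₁)
  obtain ⟨δ₂, hδ₂, hnear⟩ := Metric.eventually_nhds_iff.mp (eventually_fixes_near_fstProj hp hO)
  refine ⟨min δ₁ δ₂, lt_min hδ₁ hδ₂, fun φ hφ hfix => ?_⟩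
  have hfix_fst : ∀ Q, IsHalfProj Q → ‖Q - fstProj m‖ < δ₁ → φ Q = Q := fun Q hQ hdist =>
    hfst (dist_eq_norm Q _ ▸ hdist) φ hφ (hfix _ (.inl rfl))
      (fun V _ => hfix _ (.inr ⟨V, V.2, rfl⟩)) hQ
  rintro F (rfl | ⟨V, hV, rfl⟩) Q hQ hdist
  · exact hfix_fst Q hQ (hdist.trans_le (min_le_left _ _))
  lift V to unitaryGroup m ℂ using hV
  set u := hadamardUnitary V
  have huE := conjStarAlgAut_hadamardUnitary_fstProj V
  have hcancel : conjStarAlgAut ℂ _ u (conjStarAlgAut ℂ _ u⁻¹ Q) = Q := by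
    rw [← StarAlgEquiv.mul_apply, ← map_mul, mul_inv_cancel, map_one, StarAlgEquiv.one_apply]
  rw [← hcancel, ← conjMap_apply_eq_self_iff]
  refine hnear ?_ _ (hφ.conjMap u) ?_ (fun W hW => ?_) (hQ.conjStarAlgAut _)
  · rw [dist_eq_norm, ← norm_conjStarAlgAut u, map_sub, hcancel, huE]
    exact hdist.trans_le (min_le_right _ _)
  · rw [conjMap_apply_eq_self_iff, huE]
    exact hfix _ (.inr ⟨V, V.2, rfl⟩)
  · rw [conjMap_apply_eq_self_iff]
    refine hfix_fst _ ((isHalfProj_diagProj W).conjStarAlgAut u) ?_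
    rw [← conjStarAlgAut_hadamardUnitary_diagProj_one V, ← map_sub, norm_conjStarAlgAut,
      ← dist_eq_norm]
    exact hW

lemma isHalfProj_of_mem_frame {F : Matrix (m ⊕ m) (m ⊕ m) ℂ} (hF : F ∈ frame m) :
    IsHalfProj F := by
  rcases hF with rfl | ⟨V, hV, rfl⟩
  · exact isHalfProj_fstProj
  · exact isHalfProj_diagProj ⟨V, hV⟩

lemma eventually_conjMap_fixes_frame (hp : 0 < p) :
    ∀ᶠ g : unitaryGroup (m ⊕ m) ℂ in 𝓝 1, ∀ φ, IsLpIsometry p φ → (∀ F ∈ frame m, φ F = F) →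
      ∀ F ∈ frame m, conjMap g φ F = F := by
  obtain ⟨δ, hδ, hnear⟩ := exists_fixes_near_frame (m := m) hp
  have hg : ∀ᶠ g : unitaryGroup (m ⊕ m) ℂ in 𝓝 1,
      ‖(g : Matrix (m ⊕ m) (m ⊕ m) ℂ) - 1‖ < δ / 2 :=
    ((continuous_subtype_val.sub continuous_const).norm.tendsto' 1 0 (by simp)).eventually_lt_const
      (half_pos hδ)
  filter_upwards [hg] with g hg φ hφ hfix F hF
  have hFh := isHalfProj_of_mem_frame hF
  rw [conjMap_apply_eq_self_iff]
  refine hnear φ hφ hfix F hF _ (hFh.conjStarAlgAut g) ?_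
  calc ‖conjStarAlgAut ℂ _ g F - F‖ ≤ 2 * ‖F‖ * ‖(g : Matrix (m ⊕ m) (m ⊕ m) ℂ) - 1‖ :=
        norm_conjStarAlgAut_sub_le g F
    _ ≤ 2 * 1 * ‖(g : Matrix (m ⊕ m) (m ⊕ m) ℂ) - 1‖ := by
        gcongr
        exact hFh.isStarProjection.norm_le
    _ < δ := by linarith

lemma conjMap_fixes_frame (hp : 0 < p) (hφ : IsLpIsometry p φ)
    (hfix : ∀ F ∈ frame m, φ F = F) (g : unitaryGroup (m ⊕ m) ℂ) :
    ∀ F ∈ frame m, conjMap g φ F = F := by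
  have hone := eventually_conjMap_fixes_frame (m := m) hp
  have hinv := (continuous_inv.tendsto' (1 : unitaryGroup (m ⊕ m) ℂ) 1 inv_one).eventually hone
  have := pathConnectedSpace_unitaryGroup (m ⊕ m)
  have hg := closure_eq_top_of_mem_nhds_one (hone.and hinv) ▸ Subgroup.mem_top g
  induction hg using Subgroup.closure_induction'' generalizing φ with
  | mem g hg => exact hg.1 φ hφ hfix
  | inv_mem g hg => exact hg.2 φ hφ hfix
  | one => rwa [conjMap_one]
  | mul g h _ _ ihg ihh =>
    rw [conjMap_mul]
    exact ihh (hφ.conjMap g) (ihg hφ hfix)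

theorem stmt16_general (hp : 0 < p) (hφ : IsLpIsometry p φ) (hfix : φ (fstProj m) = fstProj m)
    (hfixU : ∀ V ∈ unitaryGroup m ℂ, φ (diagProj V) = diagProj V)
    {Q : Matrix (m ⊕ m) (m ⊕ m) ℂ} (hQ : IsHalfProj Q) : φ Q = Q := by
  have hframe : ∀ F ∈ frame m, φ F = F := by
    rintro F (rfl | ⟨V, hV, rfl⟩)
    exacts [hfix, hfixU V hV]
  obtain ⟨g, rfl⟩ := exists_conjStarAlgAut_eq_of_trace_eq isHalfProj_fstProj.isStarProjection
    hQ.isStarProjection isHalfProj_fstProj.trace_eq hQ.trace_eq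
  exact conjMap_apply_eq_self_iff.mp (conjMap_fixes_frame hp hφ hframe g _ (.inl rfl))

end Isometries

/-- A surjective `L^p`-isometry of the trace-`1/2` projections of
`M_{2n}(ℂ) = M₂(Mₙ(ℂ))` fixing `fromBlocks I 0 0 0` and all projections
`(1/2)·fromBlocks I V Vᴴ I` (`V` unitary) is the identity. -/
theorem stmt16 (n : ℕ) (hn : 1 ≤ n) (p : ℝ) (hp : 0 < p)
    (φ : Matrix (Fin n ⊕ Fin n) (Fin n ⊕ Fin n) ℂ →
      Matrix (Fin n ⊕ Fin n) (Fin n ⊕ Fin n) ℂ)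
    (hmem : ∀ P : Matrix (Fin n ⊕ Fin n) (Fin n ⊕ Fin n) ℂ,
      Pᴴ = P → P * P = P → P.trace = (n : ℂ) →
      (φ P)ᴴ = φ P ∧ φ P * φ P = φ P ∧ (φ P).trace = (n : ℂ))
    (hsurj : ∀ Q : Matrix (Fin n ⊕ Fin n) (Fin n ⊕ Fin n) ℂ,
      Qᴴ = Q → Q * Q = Q → Q.trace = (n : ℂ) →
      ∃ P : Matrix (Fin n ⊕ Fin n) (Fin n ⊕ Fin n) ℂ,
        Pᴴ = P ∧ P * P = P ∧ P.trace = (n : ℂ) ∧ φ P = Q)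
    (hiso : ∀ P Q : Matrix (Fin n ⊕ Fin n) (Fin n ⊕ Fin n) ℂ,
      Pᴴ = P → P * P = P → P.trace = (n : ℂ) →
      Qᴴ = Q → Q * Q = Q → Q.trace = (n : ℂ) →
      lpnorm p (φ P - φ Q) = lpnorm p (P - Q))
    (hfix : φ (Matrix.fromBlocks 1 0 0 0) = Matrix.fromBlocks 1 0 0 0)
    (hfixU : ∀ V ∈ Matrix.unitaryGroup (Fin n) ℂ,
      φ ((2 : ℂ)⁻¹ • Matrix.fromBlocks 1 V Vᴴ 1) =
        (2 : ℂ)⁻¹ • Matrix.fromBlocks 1 V Vᴴ 1) :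
    ∀ Q : Matrix (Fin n ⊕ Fin n) (Fin n ⊕ Fin n) ℂ,
      Qᴴ = Q → Q * Q = Q → Q.trace = (n : ℂ) → φ Q = Q := by
  intro Q hQ hQQ hQtr
  refine stmt16_general hp (isLpIsometry_iff.mpr ?_) hfix hfixU (isHalfProj_iff.mpr ?_) <;>
    rw [Fintype.card_fin]
  exacts [⟨hmem, hiso⟩, ⟨hQ, hQQ, hQtr⟩]
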